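/- Suppose τ < β/2. Then for every Δt with 0 < Δt < 1/(L/(2ε²) − (τ/β − 1/2)·ρ(A)), any u, u' ∈ ℝ^N satisfying the nonlinear RSS step (u' − u)/Δt + τ B(u' − u) + (1/ε²) f(u) = −A u obey E(u') ≤ E(u). -/

import Mathlib

open Matrix

lemma aux_taylor (f F : ℝ → ℝ) (L : ℝ)
    (hf : ∀ x, DifferentiableAt ℝ f x) (hfL : ∀ x, |deriv f x| ≤ L)
    (hF : ∀ x, HasDerivAt F (f x) x) (x y : ℝ) :
    F y ≤ F x + f x * (y - x) + L / 2 * (y - x) ^ 2 := by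
  have hlip : ∀ a b : ℝ, |f b - f a| ≤ L * |b - a| := by
    intro a b
    have := Convex.norm_image_sub_le_of_norm_deriv_le (f := f) (C := L) (s := Set.univ)
      (fun x _ => hf x) (fun x _ => by simpa using hfL x) convex_univ
      (Set.mem_univ a) (Set.mem_univ b)
    simpa using this
  let h : ℝ → ℝ := fun y => F x + f x * (y - x) + L / 2 * (y - x) ^ 2 - F y
  have hd : ∀ y, HasDerivAt h (f x + L * (y - x) - f y) y := by
    intro y
    have h1 : HasDerivAt (fun y : ℝ => y - x) 1 y := (hasDerivAt_id y).sub_const x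
    have := (((h1.const_mul (f x)).const_add (F x)).add ((h1.pow 2).const_mul (L/2))).sub (hF y)
    refine this.congr_deriv ?_
    simp
    ring
  have hx : h x = 0 := by simp [h]
  have hcont : Continuous h := continuous_iff_continuousAt.2 fun y => (hd y).continuousAt
  have key : 0 ≤ h y := by
    rcases le_total x y with hxy | hxy
    · have hm : MonotoneOn h (Set.Ici x) := by
        apply monotoneOn_of_deriv_nonneg (convex_Ici x) hcont.continuousOn
        · exact fun z _ => (hd z).differentiableAt.differentiableWithinAt
        · intro z hz
          rw [interior_Ici, Set.mem_Ioi] at hz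
          rw [(hd z).deriv]
          have := hlip x z
          rw [abs_of_pos (sub_pos.2 hz)] at this
          linarith [le_abs_self (f z - f x)]
      have := hm (Set.mem_Ici.2 le_rfl) (Set.mem_Ici.2 hxy) hxy
      linarith
    · have hm : AntitoneOn h (Set.Iic x) := by
        apply antitoneOn_of_deriv_nonpos (convex_Iic x) hcont.continuousOn
        · exact fun z _ => (hd z).differentiableAt.differentiableWithinAt
        · intro z hz
          rw [interior_Iic, Set.mem_Iio] at hz
          rw [(hd z).deriv]
          have := hlip x z
          rw [abs_of_neg (sub_neg.2 hz)] at this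
          linarith [neg_abs_le (f z - f x)]
      have := hm (Set.mem_Iic.2 hxy) (Set.mem_Iic.2 le_rfl) hxy
      linarith
  simp only [h] at key
  linarith

open scoped MatrixOrder in
lemma aux_rayleigh {N : ℕ} (A : Matrix (Fin N) (Fin N) ℝ) (hA : A.IsHermitian)
    (v : Fin N → ℝ) :
    A.mulVec v ⬝ᵥ v ≤ (⨆ i, hA.eigenvalues i) * (v ⬝ᵥ v) := by
  have h : A ≤ algebraMap ℝ _ (⨆ i, hA.eigenvalues i) := by
    apply le_algebraMap_of_spectrum_le _ hA.isSelfAdjoint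
    intro x hx
    rw [hA.spectrum_real_eq_range_eigenvalues] at hx
    obtain ⟨i, rfl⟩ := hx
    exact le_ciSup (Set.finite_range _).bddAbove i
  rw [Matrix.le_iff] at h
  have := h.dotProduct_mulVec_nonneg v
  rw [Algebra.algebraMap_eq_smul_one, sub_mulVec, smul_mulVec, one_mulVec, dotProduct_sub, dotProduct_smul] at this
  simp only [star_trivial, smul_eq_mul] at this
  rw [dotProduct_comm (A *ᵥ v)]
  linarith

/-- if `τ < β/2`, then for every time step
`0 < Δt < 1/(L/(2ε²) − (τ/β − 1/2)·ρ(A))` (with `ρ(A)` the largest eigenvalue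
of `A`), the nonlinear RSS step
`(u' − u)/Δt + τ B (u' − u) + (1/ε²) f(u) = −A u` is energy decreasing:
`E(u') ≤ E(u)`, where `E(u) = (1/2)⟨Au,u⟩ + (1/ε²) Σᵢ F(uᵢ)`. -/
theorem nonlinear_rss_conditional_stability_small_tau
    {N : ℕ} (hN : 0 < N) (A B : Matrix (Fin N) (Fin N) ℝ)
    (hA : A.PosDef) (hB : B.PosDef)
    (α β : ℝ) (hα : 0 < α) (hαβ : α ≤ β)
    (hlow : ∀ u : Fin N → ℝ, α * (B.mulVec u ⬝ᵥ u) ≤ A.mulVec u ⬝ᵥ u)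
    (hup : ∀ u : Fin N → ℝ, A.mulVec u ⬝ᵥ u ≤ β * (B.mulVec u ⬝ᵥ u))
    (ε L τ : ℝ) (hε : 0 < ε) (hL : 0 ≤ L) (hτ : 0 < τ)
    (f F : ℝ → ℝ)
    (hf : ∀ x, DifferentiableAt ℝ f x) (hfL : ∀ x, |deriv f x| ≤ L)
    (hF : ∀ x, HasDerivAt F (f x) x) (hF0 : F 0 = 0)
    (hτβ : τ < β / 2) :
    ∀ Δt : ℝ, 0 < Δt →
      Δt < 1 / (L / (2 * ε ^ 2) - (τ / β - 1 / 2) * (⨆ i, hA.1.eigenvalues i)) →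
      ∀ u u' : Fin N → ℝ,
        (1 / Δt) • (u' - u) + τ • B.mulVec (u' - u)
            + (1 / ε ^ 2) • (fun i => f (u i)) = -(A.mulVec u) →
        (1 / 2) * (A.mulVec u' ⬝ᵥ u') + (1 / ε ^ 2) * ∑ i, F (u' i) ≤
          (1 / 2) * (A.mulVec u ⬝ᵥ u) + (1 / ε ^ 2) * ∑ i, F (u i) := by
  intro Δt hΔ hΔ2 u u' heq
  set ρ := ⨆ i, hA.1.eigenvalues i with hρ
  set K := L / (2 * ε ^ 2) - (τ / β - 1 / 2) * ρ with hK
  have hβ : 0 < β := lt_of_lt_of_le hα hαβ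
  have hKpos : 0 < K := one_div_pos.1 (hΔ.trans hΔ2)
  have hKΔ : K ≤ 1 / Δt := by
    rw [le_div_iff₀ hΔ]
    rw [lt_div_iff₀ hKpos] at hΔ2
    linarith
  obtain ⟨d, rfl⟩ : ∃ d, u' = u + d := ⟨u' - u, by simp⟩
  rw [add_sub_cancel_left] at heq
  have hsym : A.mulVec d ⬝ᵥ u = A.mulVec u ⬝ᵥ d := by
    have hT : Aᵀ = A := by simpa using hA.1.eq
    rw [dotProduct_comm, dotProduct_mulVec, ← mulVec_transpose, hT]
  have hdot := congrArg (fun w => w ⬝ᵥ d) heq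
  simp only [add_dotProduct, smul_dotProduct, neg_dotProduct, smul_eq_mul] at hdot
  have hray := aux_rayleigh A hA.1 d
  rw [← hρ] at hray
  have hBd : A.mulVec d ⬝ᵥ d / β ≤ B.mulVec d ⬝ᵥ d := by
    rw [div_le_iff₀ hβ]
    linarith [hup d]
  have hsum : ∑ i, F ((u + d) i) ≤
      ∑ i, F (u i) + (fun i => f (u i)) ⬝ᵥ d + L / 2 * (d ⬝ᵥ d) := by
    simp only [dotProduct, Finset.mul_sum, ← Finset.sum_add_distrib]
    apply Finset.sum_le_sum
    intro i _
    have := aux_taylor f F L hf hfL hF (u i) ((u + d) i)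
    simp only [Pi.add_apply, add_sub_cancel_left] at this ⊢
    linarith
  have hdd : 0 ≤ d ⬝ᵥ d := by
    simp only [dotProduct]
    exact Finset.sum_nonneg fun i _ => mul_self_nonneg _
  have h1 := mul_le_mul_of_nonneg_left hsum (show 0 ≤ 1 / ε ^ 2 by positivity)
  have h2 := mul_le_mul_of_nonneg_left hBd hτ.le
  have hc : 0 ≤ 1 / 2 - τ / β := by
    rw [sub_nonneg, div_le_iff₀ hβ]
    linarith
  have h3 := mul_le_mul_of_nonneg_left hray hc
  have h4 := mul_le_mul_of_nonneg_right hKΔ hdd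
  have h5 : L / (2 * ε ^ 2) = 1 / ε ^ 2 * (L / 2) := by
    field_simp
  rw [hK, h5] at h4
  rw [mulVec_add, add_dotProduct, dotProduct_add, dotProduct_add, hsym]
  have h6 : τ * (A.mulVec d ⬝ᵥ d / β) = τ / β * (A.mulVec d ⬝ᵥ d) := by ring
  rw [h6] at h2
  nlinarith [h1, h2, h3, h4, hdot]
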